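/- arXiv:2102.13444 — 3 statements merged into one kernel-verified Lean document; each statement's English description precedes it below -/
import Mathlib

section
/- Let x₀ ∈ X and suppose the gradient errors satisfy ‖∇f_ℓ(x₀) − ∇m_ℓ(x₀)‖₂ ≤ κ̇·Δ for all ℓ = 1,…,k, for constants κ̇ > 0 and Δ > 0. Then the criticality measures satisfy |min{ω_m(x₀),1} − min{ω(x₀),1}| ≤ |ω_m(x₀) − ω(x₀)| ≤ √c·κ̇·Δ. (Corollary 6.4, the key estimate in Lemma 6.1: fully linear models yield criticality measures that agree up to O(Δ).) -/
noncomputable section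

/-- The ℓ^∞ (maximum) norm on Euclidean space. -/
def supNorm {n : ℕ} (v : EuclideanSpace ℝ (Fin n)) : ℝ :=
  ‖(WithLp.equiv 2 (Fin n → ℝ)) v‖

/-- The multiobjective criticality measure
`ω_g(x) = − inf { max_ℓ ⟨∇g_ℓ(x), d⟩ : x + d ∈ X, ‖d‖_∞ ≤ 1 }`. -/
def omega {n k : ℕ} (X : Set (EuclideanSpace ℝ (Fin n)))
    (g : Fin k → EuclideanSpace ℝ (Fin n) → ℝ) (x : EuclideanSpace ℝ (Fin n)) : ℝ :=
  - sInf ((fun d => ⨆ ℓ, fderiv ℝ (g ℓ) x d) ''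
      {d : EuclideanSpace ℝ (Fin n) | x + d ∈ X ∧ supNorm d ≤ 1})

/-!
For a fixed direction `d` with `‖d‖₂ ≤ √c`, Cauchy–Schwarz bounds the change of each slope
`⟨∇g_ℓ(x₀), d⟩` by `√c·κ̇·Δ`. Maxima over `ℓ` and infima over `d` are nonexpansive for the uniform
distance, so the bound passes to `ω`; likewise `t ↦ min{t, 1}` is nonexpansive.
-/

section ConditionallyComplete

variable {ι α : Type*} [Nonempty ι] [ConditionallyCompleteLattice α] [AddCommGroup α]
  [IsOrderedAddMonoid α] {a b : ι → α} {ε : α}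

theorem ciSup_sub_ciSup_le (hb : BddAbove (Set.range b)) (h : ∀ i, a i - b i ≤ ε) :
    (⨆ i, a i) - ⨆ i, b i ≤ ε :=
  sub_le_iff_le_add.2 <| ciSup_le fun i =>
    (sub_le_iff_le_add.1 (h i)).trans (add_le_add_right (le_ciSup hb i) ε)

theorem ciInf_sub_ciInf_le (ha : BddBelow (Set.range a)) (h : ∀ i, a i - b i ≤ ε) :
    (⨅ i, a i) - ⨅ i, b i ≤ ε :=
  sub_le_comm.1 <| le_ciInf fun i =>
    (sub_le_sub_right (ciInf_le ha i) ε).trans (sub_le_comm.1 (h i))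

theorem abs_ciSup_sub_ciSup_le (ha : BddAbove (Set.range a)) (hb : BddAbove (Set.range b))
    (h : ∀ i, |a i - b i| ≤ ε) : |(⨆ i, a i) - ⨆ i, b i| ≤ ε := by
  simp only [abs_le', neg_sub] at h ⊢
  exact ⟨ciSup_sub_ciSup_le hb fun i => (h i).1, ciSup_sub_ciSup_le ha fun i => (h i).2⟩

theorem abs_ciInf_sub_ciInf_le (ha : BddBelow (Set.range a)) (hb : BddBelow (Set.range b))
    (h : ∀ i, |a i - b i| ≤ ε) : |(⨅ i, a i) - ⨅ i, b i| ≤ ε := by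
  simp only [abs_le', neg_sub] at h ⊢
  exact ⟨ciInf_sub_ciInf_le ha fun i => (h i).1, ciInf_sub_ciInf_le hb fun i => (h i).2⟩

end ConditionallyComplete

section MaxOfFunctionals

variable {ι E : Type*} [Finite ι] [Nonempty ι] [SeminormedAddCommGroup E] [NormedSpace ℝ E]
  {D : Set E} {r ε : ℝ}

theorem bddBelow_range_ciSup_apply (hDr : ∀ d ∈ D, ‖d‖ ≤ r) (A : ι → E →L[ℝ] ℝ) :
    BddBelow (Set.range fun d : D => ⨆ i, A i d) := by
  obtain ⟨i⟩ := ‹Nonempty ι›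
  refine ⟨-(‖A i‖ * r), ?_⟩
  rintro _ ⟨d, rfl⟩
  calc -(‖A i‖ * r) ≤ A i d := neg_le_of_abs_le ((A i).le_opNorm_of_le (hDr d d.2))
    _ ≤ ⨆ j, A j d := le_ciSup (f := fun j => A j d) (Set.finite_range _).bddAbove i

theorem abs_sInf_image_ciSup_apply_sub_le (hD : D.Nonempty) (hDr : ∀ d ∈ D, ‖d‖ ≤ r)
    {A B : ι → E →L[ℝ] ℝ} (hAB : ∀ i, ‖A i - B i‖ ≤ ε) :
    |sInf ((fun d => ⨆ i, A i d) '' D) - sInf ((fun d => ⨆ i, B i d) '' D)| ≤ ε * r := by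
  have : Nonempty D := hD.to_subtype
  rw [sInf_image', sInf_image']
  refine abs_ciInf_sub_ciInf_le (bddBelow_range_ciSup_apply hDr A)
    (bddBelow_range_ciSup_apply hDr B) fun d => ?_
  refine abs_ciSup_sub_ciSup_le (Set.finite_range _).bddAbove (Set.finite_range _).bddAbove
    fun i => ?_
  exact (A i - B i).le_of_opNorm_le_of_le (hAB i) (hDr d d.2)

end MaxOfFunctionals

section CriticalityMeasure

variable {n k : ℕ} {X : Set (EuclideanSpace ℝ (Fin n))}
  {f m : Fin k → EuclideanSpace ℝ (Fin n) → ℝ} {x₀ : EuclideanSpace ℝ (Fin n)}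

theorem abs_omega_sub_omega_le (hk : 1 ≤ k) (hx₀ : x₀ ∈ X) {r ε : ℝ}
    (hr : ∀ d : EuclideanSpace ℝ (Fin n), supNorm d ≤ 1 → ‖d‖ ≤ r)
    (herr : ∀ ℓ, ‖fderiv ℝ (f ℓ) x₀ - fderiv ℝ (m ℓ) x₀‖ ≤ ε) :
    |omega X m x₀ - omega X f x₀| ≤ ε * r := by
  have : Nonempty (Fin k) := ⟨⟨0, hk⟩⟩
  have hzero : x₀ + 0 ∈ X ∧ supNorm (0 : EuclideanSpace ℝ (Fin n)) ≤ 1 :=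
    ⟨by rwa [add_zero], by simp [supNorm]⟩
  rw [omega, omega, neg_sub_neg]
  exact abs_sInf_image_ciSup_apply_sub_le ⟨0, hzero⟩ (fun d hd => hr d hd.2) herr

theorem criticality_measures_fully_linear_general (hk : 1 ≤ k) (hx₀ : x₀ ∈ X)
    {f' m' : Fin k → EuclideanSpace ℝ (Fin n)}
    (hf : ∀ ℓ, HasGradientAt (f ℓ) (f' ℓ) x₀) (hm : ∀ ℓ, HasGradientAt (m ℓ) (m' ℓ) x₀)
    {c : ℝ} (hcn : ∀ v : EuclideanSpace ℝ (Fin n), ‖v‖ ≤ Real.sqrt c * supNorm v)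
    {κdot Δ : ℝ} (herr : ∀ ℓ, ‖f' ℓ - m' ℓ‖ ≤ κdot * Δ) :
    |min (omega X m x₀) 1 - min (omega X f x₀) 1| ≤ |omega X m x₀ - omega X f x₀|
    ∧ |omega X m x₀ - omega X f x₀| ≤ Real.sqrt c * κdot * Δ := by
  have hdir (d : EuclideanSpace ℝ (Fin n)) (hd : supNorm d ≤ 1) : ‖d‖ ≤ Real.sqrt c :=
    (hcn d).trans (mul_le_of_le_one_right (Real.sqrt_nonneg c) hd)
  have hfderiv (ℓ : Fin k) : ‖fderiv ℝ (f ℓ) x₀ - fderiv ℝ (m ℓ) x₀‖ ≤ κdot * Δ := by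
    rw [(hf ℓ).hasFDerivAt.fderiv, (hm ℓ).hasFDerivAt.fderiv, ← map_sub,
      LinearIsometryEquiv.norm_map]
    exact herr ℓ
  constructor
  · simpa using abs_min_sub_min_le_max (omega X m x₀) 1 (omega X f x₀) 1
  · calc |omega X m x₀ - omega X f x₀| ≤ κdot * Δ * Real.sqrt c :=
          abs_omega_sub_omega_le hk hx₀ hdir hfderiv
      _ = Real.sqrt c * κdot * Δ := by ring

end CriticalityMeasure

/-- Corollary 6.4: if the gradient errors satisfy
`‖∇f_ℓ(x₀) − ∇m_ℓ(x₀)‖₂ ≤ κ̇·Δ` for all `ℓ`, then the (truncated) criticality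
measures agree up to `O(Δ)`:
`|min{ω_m(x₀),1} − min{ω(x₀),1}| ≤ |ω_m(x₀) − ω(x₀)| ≤ √c·κ̇·Δ`. -/
theorem criticality_measures_fully_linear
    (n k : ℕ) (hk : 1 ≤ k)
    (X : Set (EuclideanSpace ℝ (Fin n)))
    (hXne : X.Nonempty) (hXconv : Convex ℝ X) (hXcomp : IsCompact X)
    (f m : Fin k → EuclideanSpace ℝ (Fin n) → ℝ)
    (U : Set (EuclideanSpace ℝ (Fin n))) (hUopen : IsOpen U) (hXU : X ⊆ U)
    (hf : ∀ ℓ, ContDiffOn ℝ 1 (f ℓ) U)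
    (hm : ∀ ℓ, ContDiffOn ℝ 1 (m ℓ) U)
    (c : ℝ) (hc : 0 < c)
    (hcn : ∀ v : EuclideanSpace ℝ (Fin n), ‖v‖ ≤ Real.sqrt c * supNorm v)
    (x₀ : EuclideanSpace ℝ (Fin n)) (hx₀ : x₀ ∈ X)
    (κdot Δ : ℝ) (hκdot : 0 < κdot) (hΔ : 0 < Δ)
    (herr : ∀ ℓ, ‖gradient (f ℓ) x₀ - gradient (m ℓ) x₀‖ ≤ κdot * Δ) :
    |min (omega X m x₀) 1 - min (omega X f x₀) 1| ≤ |omega X m x₀ - omega X f x₀|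
    ∧ |omega X m x₀ - omega X f x₀| ≤ Real.sqrt c * κdot * Δ := by
  have hU : U ∈ nhds x₀ := hUopen.mem_nhds (hXU hx₀)
  exact criticality_measures_fully_linear_general hk hx₀
    (fun ℓ => ((hf ℓ).differentiableOn one_ne_zero).hasGradientAt hU)
    (fun ℓ => ((hm ℓ).differentiableOn one_ne_zero).hasGradientAt hU) hcn herr
end
end

section
/- Let x₀ ∈ X be non-Pareto-critical for the model, i.e. ω_m(x₀) > 0. Define the local model ideal point i ∈ ℝᵏ by i_ℓ := min_{x ∈ X} m_ℓ(x), the direction r := m(x₀) − i ∈ ℝᵏ (componentwise nonnegative), and assume min_ℓ r_ℓ / max_ℓ r_ℓ ≥ r̄ for a constant r̄ ∈ (0,1]. Let (τ⁺, x⁺) ∈ ℝ × B be a minimizer of τ over the Pascoletti–Serafini feasible set {(τ, x) : x ∈ B, m_ℓ(x₀) + τ·r_ℓ − m_ℓ(x) ≥ 0 for all ℓ}. Then Φ_m(x₀) − Φ_m(x⁺) ≥ (r̄/2)·ω_m(x₀)·min{ ω_m(x₀)/(c·H), Δ, 1 }. (Lemma B.1, using the strict Pareto-Cauchy bound with backtracking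 constants a = b = 1/2.) -/
noncomputable section

/-- Frobenius norm of the Hessian of `g : ℝⁿ → ℝ` at `x`. -/
def frobHess {n : ℕ} (g : EuclideanSpace ℝ (Fin n) → ℝ)
    (x : EuclideanSpace ℝ (Fin n)) : ℝ :=
  Real.sqrt (∑ i : Fin n, ∑ j : Fin n,
    (fderiv ℝ (fun y => fderiv ℝ g y (EuclideanSpace.single j (1:ℝ))) x
      (EuclideanSpace.single i (1:ℝ))) ^ 2)

/-!
For every `σ < ω_m(x₀)` there is an admissible direction along which each component has slope at
most `-σ`. A step of length `t = min (σ / (c * H)) (min Δ 1)` along it stays in the trust region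
and, since the second-order term is at most `t² * c * H / 2 ≤ t * σ / 2`, lowers each component by
at least `δ = σ * t / 2`. Hence `τ = -δ / max r` is feasible for the Pascoletti–Serafini problem,
so at a minimizer every component lies below `Φ_m(x₀)` by at least `δ * min r / max r`.
Let `σ` increase to `ω_m(x₀)`.
-/

open Set Filter Topology

section Taylor

lemma image_le_quadratic_of_second_deriv_right_le {f f' f'' : ℝ → ℝ} {a b K : ℝ} (hab : a ≤ b)
    (hf : ContinuousOn f (Icc a b)) (hf' : ∀ x ∈ Ico a b, HasDerivWithinAt f (f' x) (Ici x) x)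
    (hf'_cont : ContinuousOn f' (Icc a b))
    (hf'' : ∀ x ∈ Ico a b, HasDerivWithinAt f' (f'' x) (Ici x) x)
    (hK : ∀ x ∈ Ico a b, f'' x ≤ K) :
    f b ≤ f a + f' a * (b - a) + K * (b - a) ^ 2 / 2 := by
  have hslope : ∀ x ∈ Icc a b, f' x ≤ f' a + K * (x - a) := by
    refine image_le_of_deriv_right_le_deriv_boundary hf'_cont hf'' (by simp) (by fun_prop)
      (fun x _ => ?_) hK
    simpa using ((((hasDerivAt_id x).sub_const a).const_mul K).const_add (f' a)).hasDerivWithinAt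
  have hvalue : ∀ x ∈ Icc a b, f x ≤ f a + f' a * (x - a) + K * (x - a) ^ 2 / 2 := by
    refine image_le_of_deriv_right_le_deriv_boundary hf hf' (by simp) (by fun_prop)
      (fun x _ => ?_) (fun x hx => hslope x (Ico_subset_Icc_self hx))
    have hx := (hasDerivAt_id x).sub_const a
    refine (((hx.const_mul (f' a)).const_add (f a)).add
      (((hx.pow 2).const_mul K).div_const 2)).congr_deriv ?_ |>.hasDerivWithinAt
    simp only [id]
    ring
  exact hvalue b ⟨hab, le_rfl⟩

variable {E : Type*} [NormedAddCommGroup E] [NormedSpace ℝ E] {f : E → ℝ} {x d : E} {t : ℝ}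

lemma le_add_fderiv_add_of_fderiv_fderiv_le {K : ℝ} (ht : 0 ≤ t)
    (hf : ∀ s ∈ Icc 0 t, DifferentiableAt ℝ f (x + s • d))
    (hf' : ∀ s ∈ Icc 0 t, DifferentiableAt ℝ (fderiv ℝ f) (x + s • d))
    (hK : ∀ s ∈ Icc 0 t, fderiv ℝ (fderiv ℝ f) (x + s • d) d d ≤ K) :
    f (x + t • d) ≤ f x + fderiv ℝ f x d * t + K * t ^ 2 / 2 := by
  have hline (s : ℝ) : HasDerivAt (fun s : ℝ => x + s • d) d s := by
    simpa using ((hasDerivAt_id s).smul_const d).const_add x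
  have hderiv : ∀ s ∈ Icc 0 t,
      HasDerivAt (fun s => f (x + s • d)) (fderiv ℝ f (x + s • d) d) s :=
    fun s hs => (hf s hs).hasFDerivAt.comp_hasDerivAt s (hline s)
  have hderiv₂ : ∀ s ∈ Icc 0 t, HasDerivAt (fun s => fderiv ℝ f (x + s • d) d)
      (fderiv ℝ (fderiv ℝ f) (x + s • d) d d) s := fun s hs => by
    have hgrad : HasDerivAt (fun s => fderiv ℝ f (x + s • d))
        (fderiv ℝ (fderiv ℝ f) (x + s • d) d) s :=
      (hf' s hs).hasFDerivAt.comp_hasDerivAt s (hline s)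
    simpa using hgrad.clm_apply (hasDerivAt_const s d)
  simpa using image_le_quadratic_of_second_deriv_right_le (f := fun s => f (x + s • d))
    (f' := fun s => fderiv ℝ f (x + s • d) d)
    (f'' := fun s => fderiv ℝ (fderiv ℝ f) (x + s • d) d d) ht
    (HasDerivAt.continuousOn hderiv)
    (fun s hs => (hderiv s (Ico_subset_Icc_self hs)).hasDerivWithinAt)
    (HasDerivAt.continuousOn hderiv₂)
    (fun s hs => (hderiv₂ s (Ico_subset_Icc_self hs)).hasDerivWithinAt)
    (fun s hs => hK s (Ico_subset_Icc_self hs))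

lemma le_sub_half_mul_of_fderiv_le_neg {K σ : ℝ} (ht : 0 ≤ t)
    (hf : ∀ s ∈ Icc 0 t, DifferentiableAt ℝ f (x + s • d))
    (hf' : ∀ s ∈ Icc 0 t, DifferentiableAt ℝ (fderiv ℝ f) (x + s • d))
    (hK : ∀ s ∈ Icc 0 t, fderiv ℝ (fderiv ℝ f) (x + s • d) d d ≤ K)
    (hσ : fderiv ℝ f x d ≤ -σ) (htK : t * K ≤ σ) :
    f (x + t • d) ≤ f x - σ / 2 * t :=
  calc f (x + t • d) ≤ f x + fderiv ℝ f x d * t + t * K * t / 2 := by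
        linarith [le_add_fderiv_add_of_fderiv_fderiv_le ht hf hf' hK]
    _ ≤ f x + -σ * t + σ * t / 2 := by gcongr
    _ = f x - σ / 2 * t := by ring

end Taylor

section Frobenius

lemma bilin_apply_le_frobenius_mul_norm {ι E : Type*} [Fintype ι] [NormedAddCommGroup E]
    [InnerProductSpace ℝ E] (b : OrthonormalBasis ι ℝ E) (F : E →L[ℝ] E →L[ℝ] ℝ) (x y : E) :
    F x y ≤ √(∑ i, ∑ j, F (b i) (b j) ^ 2) * (‖x‖ * ‖y‖) := by
  have hexpand : F x y = ∑ p : ι × ι, F (b p.1) (b p.2) * (b.repr x p.1 * b.repr y p.2) := by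
    conv_lhs => rw [← b.sum_repr x, ← b.sum_repr y]
    simp only [map_sum, map_smul, sum_apply, smul_apply, smul_eq_mul, Fintype.sum_prod_type,
      Finset.mul_sum]
    rw [Finset.sum_comm]
    exact Finset.sum_congr rfl fun _ _ => Finset.sum_congr rfl fun _ _ => by ring
  have hnorm : ∑ p : ι × ι, (b.repr x p.1 * b.repr y p.2) ^ 2 = (‖x‖ * ‖y‖) ^ 2 := by
    rw [mul_pow, ← b.repr.norm_map x, ← b.repr.norm_map y, EuclideanSpace.real_norm_sq_eq,
      EuclideanSpace.real_norm_sq_eq, Finset.sum_mul_sum, Fintype.sum_prod_type]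
    simp only [mul_pow]
  have hcauchy := Real.sum_mul_le_sqrt_mul_sqrt Finset.univ
    (fun p : ι × ι => F (b p.1) (b p.2)) (fun p => b.repr x p.1 * b.repr y p.2)
  rwa [hnorm, Real.sqrt_sq (by positivity), ← hexpand, Fintype.sum_prod_type] at hcauchy

variable {n : ℕ} {g : EuclideanSpace ℝ (Fin n) → ℝ}

lemma frobHess_nonneg (g : EuclideanSpace ℝ (Fin n) → ℝ) (x : EuclideanSpace ℝ (Fin n)) :
    0 ≤ frobHess g x :=
  Real.sqrt_nonneg _

lemma frobHess_eq_sqrt_sum_fderiv_fderiv {x : EuclideanSpace ℝ (Fin n)}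
    (hg : DifferentiableAt ℝ (fderiv ℝ g) x) :
    frobHess g x = √(∑ i, ∑ j, fderiv ℝ (fderiv ℝ g) x
      (EuclideanSpace.single i 1) (EuclideanSpace.single j 1) ^ 2) := by
  simp [frobHess, fderiv_clm_apply hg (differentiableAt_const _)]

lemma fderiv_fderiv_apply_self_le_frobHess {x : EuclideanSpace ℝ (Fin n)}
    (hg : DifferentiableAt ℝ (fderiv ℝ g) x) (d : EuclideanSpace ℝ (Fin n)) :
    fderiv ℝ (fderiv ℝ g) x d d ≤ frobHess g x * ‖d‖ ^ 2 := by
  simpa [frobHess_eq_sqrt_sum_fderiv_fderiv hg, sq ‖d‖] using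
    bilin_apply_le_frobenius_mul_norm (EuclideanSpace.basisFun (Fin n) ℝ)
      (fderiv ℝ (fderiv ℝ g) x) d d

lemma continuousOn_frobHess {U : Set (EuclideanSpace ℝ (Fin n))} (hU : IsOpen U)
    (hg : ContDiffOn ℝ 2 g U) : ContinuousOn (frobHess g) U := by
  refine Real.continuous_sqrt.comp_continuousOn
    (continuousOn_finsetSum _ fun i _ => continuousOn_finsetSum _ fun j _ => ?_)
  have hpartial : ContDiffOn ℝ 1 (fun y => fderiv ℝ g y (EuclideanSpace.single j 1)) U :=
    (hg.fderiv_of_isOpen hU (by norm_num)).clm_apply contDiffOn_const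
  exact ((hpartial.continuousOn_fderiv_of_isOpen hU le_rfl).clm_apply continuousOn_const).pow 2

lemma frobHess_le_iSup_iSup {ι : Type*} [Finite ι] {m : ι → EuclideanSpace ℝ (Fin n) → ℝ}
    {B U : Set (EuclideanSpace ℝ (Fin n))} (hB : IsCompact B) (hU : IsOpen U) (hBU : B ⊆ U)
    (hm : ∀ ℓ, ContDiffOn ℝ 2 (m ℓ) U) (ℓ : ι) {y : EuclideanSpace ℝ (Fin n)} (hy : y ∈ B) :
    frobHess (m ℓ) y ≤ ⨆ ℓ, ⨆ y : B, frobHess (m ℓ) y := by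
  have hbdd : BddAbove (range fun y : B => frobHess (m ℓ) y) := by
    simpa only [image_eq_range] using
      hB.bddAbove_image ((continuousOn_frobHess hU (hm ℓ)).mono hBU)
  exact (le_ciSup hbdd ⟨y, hy⟩).trans
    (le_ciSup (f := fun ℓ => ⨆ y : B, frobHess (m ℓ) y) (finite_range _).bddAbove ℓ)

end Frobenius

section TrustRegion

variable {n : ℕ}

lemma supNorm_zero : supNorm (0 : EuclideanSpace ℝ (Fin n)) = 0 := by
  simp [supNorm]

lemma supNorm_smul (t : ℝ) (v : EuclideanSpace ℝ (Fin n)) :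
    supNorm (t • v) = |t| * supNorm v := by
  simp [supNorm, norm_smul]

lemma continuous_supNorm : Continuous (supNorm (n := n)) :=
  (PiLp.continuous_ofLp 2 _).norm

/-- The trust region of radius `Δ` around `x₀` within `X`, measured in the maximum norm. -/
def trustRegion (X : Set (EuclideanSpace ℝ (Fin n))) (x₀ : EuclideanSpace ℝ (Fin n)) (Δ : ℝ) :
    Set (EuclideanSpace ℝ (Fin n)) :=
  {y ∈ X | supNorm (y - x₀) ≤ Δ}

variable {X : Set (EuclideanSpace ℝ (Fin n))} {x₀ d : EuclideanSpace ℝ (Fin n)} {Δ : ℝ}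

lemma trustRegion_subset : trustRegion X x₀ Δ ⊆ X :=
  sep_subset _ _

lemma self_mem_trustRegion (hx₀ : x₀ ∈ X) (hΔ : 0 ≤ Δ) : x₀ ∈ trustRegion X x₀ Δ :=
  ⟨hx₀, by rwa [sub_self, supNorm_zero]⟩

lemma isCompact_trustRegion (hX : IsCompact X) : IsCompact (trustRegion X x₀ Δ) :=
  hX.inter_right
    (isClosed_le (continuous_supNorm.comp (continuous_id.sub continuous_const)) continuous_const)

lemma add_smul_mem_trustRegion (hX : StarConvex ℝ x₀ X) (hdX : x₀ + d ∈ X) (hd : supNorm d ≤ 1)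
    {s : ℝ} (hs : s ∈ Icc 0 (min Δ 1)) : x₀ + s • d ∈ trustRegion X x₀ Δ := by
  refine ⟨hX.add_smul_mem hdX hs.1 (hs.2.trans (min_le_right _ _)), ?_⟩
  rw [add_sub_cancel_left, supNorm_smul, abs_of_nonneg hs.1]
  exact (mul_le_of_le_one_right hs.1 hd).trans (hs.2.trans (min_le_left _ _))

end TrustRegion

section CauchyDecrease

variable {n k : ℕ} {X : Set (EuclideanSpace ℝ (Fin n))}
  {m : Fin k → EuclideanSpace ℝ (Fin n) → ℝ} {x₀ : EuclideanSpace ℝ (Fin n)} {σ : ℝ}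

lemma exists_forall_fderiv_le_neg_of_lt_omega (hx₀ : x₀ ∈ X) (hσ : σ < omega X m x₀) :
    ∃ d, x₀ + d ∈ X ∧ supNorm d ≤ 1 ∧ ∀ ℓ, fderiv ℝ (m ℓ) x₀ d ≤ -σ := by
  have hne : {d | x₀ + d ∈ X ∧ supNorm d ≤ 1}.Nonempty :=
    ⟨0, by rwa [add_zero], supNorm_zero.trans_le zero_le_one⟩
  obtain ⟨_, ⟨d, ⟨hdX, hd⟩, rfl⟩, hlt⟩ := exists_lt_of_csInf_lt (hne.image _) (lt_neg_of_lt_neg hσ)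
  exact ⟨d, hdX, hd, fun ℓ =>
    (le_ciSup (f := fun ℓ => fderiv ℝ (m ℓ) x₀ d) (finite_range _).bddAbove ℓ).trans hlt.le⟩

lemma exists_mem_trustRegion_forall_le_sub_of_lt_omega [NeZero k] {Δ H c : ℝ} (hx₀ : x₀ ∈ X)
    (hX : StarConvex ℝ x₀ X) (hΔ : 0 ≤ Δ)
    (hm : ∀ ℓ, ∀ y ∈ trustRegion X x₀ Δ, DifferentiableAt ℝ (m ℓ) y)
    (hm' : ∀ ℓ, ∀ y ∈ trustRegion X x₀ Δ, DifferentiableAt ℝ (fderiv ℝ (m ℓ)) y)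
    (hH : ∀ ℓ, ∀ y ∈ trustRegion X x₀ Δ, frobHess (m ℓ) y ≤ H)
    (hc : 0 ≤ c) (hcn : ∀ v : EuclideanSpace ℝ (Fin n), ‖v‖ ≤ √c * supNorm v)
    (hσ₀ : 0 ≤ σ) (hσ : σ < omega X m x₀) :
    ∃ y ∈ trustRegion X x₀ Δ, ∀ ℓ,
      m ℓ y ≤ m ℓ x₀ - σ / 2 * min (σ / (c * H)) (min Δ 1) := by
  obtain ⟨d, hdX, hd, hslope⟩ := exists_forall_fderiv_le_neg_of_lt_omega hx₀ hσ
  have hH₀ : 0 ≤ H := (frobHess_nonneg _ _).trans (hH 0 x₀ (self_mem_trustRegion hx₀ hΔ))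
  have hd_sq : ‖d‖ ^ 2 ≤ c :=
    (Real.le_sqrt (norm_nonneg d) hc).1
      ((hcn d).trans (mul_le_of_le_one_right (Real.sqrt_nonneg c) hd))
  set t := min (σ / (c * H)) (min Δ 1)
  have ht : 0 ≤ t := le_min (by positivity) (le_min hΔ zero_le_one)
  have htcH : t * (c * H) ≤ σ := mul_le_of_le_div₀ hσ₀ (by positivity) (min_le_left _ _)
  have hseg : ∀ s ∈ Icc 0 t, x₀ + s • d ∈ trustRegion X x₀ Δ := fun s hs =>
    add_smul_mem_trustRegion hX hdX hd ⟨hs.1, hs.2.trans (min_le_right _ _)⟩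
  refine ⟨x₀ + t • d, hseg t ⟨ht, le_rfl⟩, fun ℓ => ?_⟩
  refine le_sub_half_mul_of_fderiv_le_neg ht (fun s hs => hm ℓ _ (hseg s hs))
    (fun s hs => hm' ℓ _ (hseg s hs)) (fun s hs => ?_) (hslope ℓ) htcH
  calc fderiv ℝ (fderiv ℝ (m ℓ)) (x₀ + s • d) d d
      ≤ frobHess (m ℓ) (x₀ + s • d) * ‖d‖ ^ 2 :=
        fderiv_fderiv_apply_self_le_frobHess (hm' ℓ _ (hseg s hs)) d
    _ ≤ H * c := mul_le_mul (hH ℓ _ (hseg s hs)) hd_sq (by positivity) hH₀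
    _ = c * H := mul_comm H c

end CauchyDecrease

section PascolettiSerafini

variable {ι α : Type*}

/-- The feasible set of the Pascoletti–Serafini scalarization of `min f` over `B` with reference
point `a` and direction `r`, whose objective is the first coordinate `τ`. -/
def pascolettiSerafiniFeasible (f : ι → α → ℝ) (B : Set α) (a r : ι → ℝ) : Set (ℝ × α) :=
  {p | p.2 ∈ B ∧ ∀ ℓ, f ℓ p.2 ≤ a ℓ + p.1 * r ℓ}

variable {f : ι → α → ℝ} {B : Set α} {a r : ι → ℝ} {p : ℝ × α} {y : α} {δ : ℝ}

lemma fst_le_neg_div_of_isMinOn_pascolettiSerafiniFeasible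
    (hmin : IsMinOn Prod.fst (pascolettiSerafiniFeasible f B a r) p) {R : ℝ} (hR : 0 < R)
    (hrR : ∀ ℓ, r ℓ ≤ R) (hδ : 0 ≤ δ) (hy : y ∈ B) (hfy : ∀ ℓ, f ℓ y ≤ a ℓ - δ) :
    p.1 ≤ -(δ / R) := by
  have hfeasible : (-(δ / R), y) ∈ pascolettiSerafiniFeasible f B a r := by
    refine ⟨hy, fun ℓ => ?_⟩
    have : δ / R * r ℓ ≤ δ :=
      (mul_le_mul_of_nonneg_left (hrR ℓ) (by positivity)).trans_eq (div_mul_cancel₀ δ hR.ne')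
    linarith [hfy ℓ]
  exact hmin hfeasible

lemma mul_le_iSup_sub_iSup_of_isMinOn_pascolettiSerafiniFeasible [Finite ι] [Nonempty ι]
    (hp : p ∈ pascolettiSerafiniFeasible f B a r)
    (hmin : IsMinOn Prod.fst (pascolettiSerafiniFeasible f B a r) p)
    (hr : ∀ ℓ, 0 ≤ r ℓ) {ρ : ℝ} (hρ : 0 < ρ) (hratio : ρ ≤ (⨅ ℓ, r ℓ) / ⨆ ℓ, r ℓ)
    (hδ : 0 ≤ δ) (hy : y ∈ B) (hfy : ∀ ℓ, f ℓ y ≤ a ℓ - δ) :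
    ρ * δ ≤ (⨆ ℓ, a ℓ) - ⨆ ℓ, f ℓ p.2 := by
  set R := ⨆ ℓ, r ℓ
  have hR : 0 < R := (Real.iSup_nonneg hr).lt_of_ne' fun h =>
    (hρ.trans_le hratio).ne' (by rw [show R = 0 from h, div_zero])
  have hτ : p.1 ≤ -(δ / R) := fst_le_neg_div_of_isMinOn_pascolettiSerafiniFeasible hmin hR
    (le_ciSup (finite_range r).bddAbove) hδ hy hfy
  have hρr (ℓ : ι) : ρ * R ≤ r ℓ :=
    ((le_div_iff₀ hR).1 hratio).trans (ciInf_le (finite_range r).bddBelow ℓ)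
  refine le_sub_comm.1 (ciSup_le fun ℓ => ?_)
  calc f ℓ p.2 ≤ a ℓ + p.1 * r ℓ := hp.2 ℓ
    _ ≤ a ℓ + -(δ / R) * r ℓ := by gcongr; exact hr ℓ
    _ ≤ a ℓ - δ / R * (ρ * R) := by
        linarith [mul_le_mul_of_nonneg_left (hρr ℓ) (div_nonneg hδ hR.le)]
    _ = a ℓ - ρ * δ := by field_simp
    _ ≤ (⨆ ℓ, a ℓ) - ρ * δ := by gcongr; exact le_ciSup (finite_range a).bddAbove ℓ

end PascolettiSerafini

theorem pascoletti_serafini_sufficient_decrease_general {n k : ℕ} [NeZero k]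
    {X : Set (EuclideanSpace ℝ (Fin n))} {m : Fin k → EuclideanSpace ℝ (Fin n) → ℝ}
    {x₀ : EuclideanSpace ℝ (Fin n)} (hx₀ : x₀ ∈ X) (hX : StarConvex ℝ x₀ X)
    {Δ : ℝ} (hΔ : 0 ≤ Δ)
    (hm : ∀ ℓ, ∀ y ∈ trustRegion X x₀ Δ, DifferentiableAt ℝ (m ℓ) y)
    (hm' : ∀ ℓ, ∀ y ∈ trustRegion X x₀ Δ, DifferentiableAt ℝ (fderiv ℝ (m ℓ)) y)
    {H : ℝ} (hH : ∀ ℓ, ∀ y ∈ trustRegion X x₀ Δ, frobHess (m ℓ) y ≤ H)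
    {c : ℝ} (hc : 0 ≤ c) (hcn : ∀ v : EuclideanSpace ℝ (Fin n), ‖v‖ ≤ √c * supNorm v)
    (hω : 0 < omega X m x₀)
    {r : Fin k → ℝ} (hr : ∀ ℓ, 0 ≤ r ℓ)
    {ρ : ℝ} (hρ : 0 < ρ) (hratio : ρ ≤ (⨅ ℓ, r ℓ) / ⨆ ℓ, r ℓ)
    {p : ℝ × EuclideanSpace ℝ (Fin n)}
    (hp : p ∈ pascolettiSerafiniFeasible m (trustRegion X x₀ Δ) (fun ℓ => m ℓ x₀) r)
    (hmin : IsMinOn Prod.fst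
      (pascolettiSerafiniFeasible m (trustRegion X x₀ Δ) (fun ℓ => m ℓ x₀) r) p) :
    ρ / 2 * omega X m x₀ * min (omega X m x₀ / (c * H)) (min Δ 1)
      ≤ (⨆ ℓ, m ℓ x₀) - ⨆ ℓ, m ℓ p.2 := by
  have hH₀ : 0 ≤ H := (frobHess_nonneg _ _).trans (hH 0 x₀ (self_mem_trustRegion hx₀ hΔ))
  have hbound : ∀ σ ∈ Ioo 0 (omega X m x₀),
      ρ / 2 * σ * min (σ / (c * H)) (min Δ 1) ≤ (⨆ ℓ, m ℓ x₀) - ⨆ ℓ, m ℓ p.2 := by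
    intro σ ⟨hσ₀, hσ⟩
    obtain ⟨y, hy, hdecrease⟩ :=
      exists_mem_trustRegion_forall_le_sub_of_lt_omega hx₀ hX hΔ hm hm' hH hc hcn hσ₀.le hσ
    have hδ : 0 ≤ σ / 2 * min (σ / (c * H)) (min Δ 1) := by positivity
    linarith [mul_le_iSup_sub_iSup_of_isMinOn_pascolettiSerafiniFeasible hp hmin hr hρ hratio
      hδ hy hdecrease]
  have hcont : Continuous fun σ => ρ / 2 * σ * min (σ / (c * H)) (min Δ 1) := by fun_prop
  exact le_of_tendsto (hcont.continuousWithinAt (s := Iio (omega X m x₀)))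
    (mem_of_superset (Ioo_mem_nhdsLT hω) hbound)

/-- Lemma B.1: the Pascoletti–Serafini trial point `x⁺` achieves the sufficient
decrease `Φ_m(x₀) − Φ_m(x⁺) ≥ (r̄/2)·ω_m(x₀)·min{ω_m(x₀)/(c·H), Δ, 1}`. -/
theorem pascoletti_serafini_sufficient_decrease
    (n k : ℕ) (hk : 1 ≤ k)
    (X : Set (EuclideanSpace ℝ (Fin n)))
    (hXne : X.Nonempty) (hXconv : Convex ℝ X) (hXcomp : IsCompact X)
    (m : Fin k → EuclideanSpace ℝ (Fin n) → ℝ)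
    (U : Set (EuclideanSpace ℝ (Fin n))) (hUopen : IsOpen U) (hXU : X ⊆ U)
    (hm : ∀ ℓ, ContDiffOn ℝ 2 (m ℓ) U)
    (x₀ : EuclideanSpace ℝ (Fin n)) (hx₀ : x₀ ∈ X)
    (Δ : ℝ) (hΔ : 0 < Δ)
    (B : Set (EuclideanSpace ℝ (Fin n))) (hB : B = {y ∈ X | supNorm (y - x₀) ≤ Δ})
    (H : ℝ) (hH : H = ⨆ ℓ : Fin k, ⨆ y : B, frobHess (m ℓ) (y : EuclideanSpace ℝ (Fin n)))
    (c : ℝ) (hc : 0 < c)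
    (hcn : ∀ v : EuclideanSpace ℝ (Fin n), ‖v‖ ≤ Real.sqrt c * supNorm v)
    -- `x₀` is not Pareto-critical for the model
    (hωpos : 0 < omega X m x₀)
    -- the local model ideal point `i` and the direction `r = m(x₀) − i ≥ 0`
    (i : Fin k → ℝ) (hi : ∀ ℓ, i ℓ = sInf (m ℓ '' X))
    (r : Fin k → ℝ) (hr : ∀ ℓ, r ℓ = m ℓ x₀ - i ℓ) (hrpos : ∀ ℓ, 0 ≤ r ℓ)
    (rbar : ℝ) (hrbar0 : 0 < rbar) (hrbar1 : rbar ≤ 1)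
    (hrratio : (⨅ ℓ, r ℓ) / (⨆ ℓ, r ℓ) ≥ rbar)
    -- `(τ⁺, x⁺)` minimizes `τ` over the Pascoletti–Serafini feasible set
    (τplus : ℝ) (xplus : EuclideanSpace ℝ (Fin n))
    (hxplusB : xplus ∈ B)
    (hxplusfeas : ∀ ℓ, m ℓ x₀ + τplus * r ℓ - m ℓ xplus ≥ 0)
    (hmin : ∀ (τ : ℝ) (x : EuclideanSpace ℝ (Fin n)), x ∈ B →
      (∀ ℓ, m ℓ x₀ + τ * r ℓ - m ℓ x ≥ 0) → τplus ≤ τ) :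
    (⨆ ℓ, m ℓ x₀) - (⨆ ℓ, m ℓ xplus)
      ≥ (rbar / 2) * omega X m x₀ * min (omega X m x₀ / (c * H)) (min Δ 1) := by
  have : NeZero k := ⟨by lia⟩
  change B = trustRegion X x₀ Δ at hB
  subst hB hH
  have hBU : trustRegion X x₀ Δ ⊆ U := trustRegion_subset.trans hXU
  exact pascoletti_serafini_sufficient_decrease_general hx₀ (hXconv.starConvex hx₀) hΔ.le
    (fun ℓ y hy => ((hm ℓ).contDiffAt (hUopen.mem_nhds (hBU hy))).differentiableAt two_ne_zero)
    (fun ℓ y hy => (((hm ℓ).contDiffAt (hUopen.mem_nhds (hBU hy))).fderiv_right (m := 1)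
      (by norm_num)).differentiableAt one_ne_zero)
    (fun ℓ y hy => frobHess_le_iSup_iSup (isCompact_trustRegion hXcomp) hUopen hBU hm ℓ hy)
    hc.le hcn hωpos hrpos hrbar0 hrratio (p := (τplus, xplus))
    ⟨hxplusB, fun ℓ => sub_nonneg.1 (hxplusfeas ℓ)⟩
    fun p hp => hmin p.1 p.2 hp.1 fun ℓ => sub_nonneg.2 (hp.2 ℓ)
end
end

section
/- Let (xᵢ)_{i∈ℕ} be a sequence in X, (Δᵢ) positive radii, and for each i let mᵢ : ℝⁿ → ℝᵏ be continuously differentiable with gradient errors ‖∇f_ℓ(xᵢ) − ∇(mᵢ)_ℓ(xᵢ)‖₂ ≤ κ̇·Δᵢ for all ℓ, where κ̇ > 0. Suppose Δᵢ ≤ μ·ω̃_{mᵢ}(xᵢ) for a constant μ > 0, where ω̃_{mᵢ}(xᵢ) := min{ω_{mᵢ}(xᵢ), 1}. Then ω̃(xᵢ) ≤ (√c·κ̇·μ + 1)·ω̃_{mᵢ}(xᵢ) for all i, where ω̃(x) := min{ω(x), 1}; consequently, if ω̃_{mᵢ}(xᵢ) → 0 as i → ∞, then ω̃(xᵢ)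 → 0 as well. (Lemma 6.12.) -/
noncomputable section

/-!
The measure `ω_g(x)` is the negative of an infimum, over directions `d` with `‖d‖₂ ≤ √c`, of a
maximum of linear functionals `⟨∇g_ℓ(x), d⟩`, so changing the gradients by at most `ε` changes
`ω_g(x)` by at most `√c · ε`. Truncation at `1` preserves this estimate, and with
`ε = κ̇ Δᵢ ≤ κ̇ μ ω̃_{mᵢ}(xᵢ)` the error is absorbed into a multiple of `ω̃_{mᵢ}(xᵢ)`.
-/

section MaxDescent

variable {ι E : Type*} [NormedAddCommGroup E] [NormedSpace ℝ E]

/-- The best common decrease `- inf_{d ∈ D} max_ℓ φ_ℓ(d)` of the functionals `φ_ℓ` over the set `D`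
of directions; `omega` is the case where `φ_ℓ` are the derivatives of the objectives. The value is
meaningful for finite nonempty `ι` and bounded nonempty `D`. -/
def maxDescent (φ : ι → E →L[ℝ] ℝ) (D : Set E) : ℝ :=
  - sInf ((fun d => ⨆ ℓ, φ ℓ d) '' D)

variable {φ ψ : ι → E →L[ℝ] ℝ} {D : Set E} {C ε r : ℝ} {d : E}

lemma maxDescent_le (hD : D.Nonempty) (h : ∀ d ∈ D, -(⨆ ℓ, φ ℓ d) ≤ r) :
    maxDescent φ D ≤ r :=
  neg_le.mp <| le_csInf (hD.image _) <| Set.forall_mem_image.mpr fun d hd => neg_le.mp (h d hd)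

variable [Finite ι] [Nonempty ι]

lemma bddBelow_image_iSup_of_isBounded (hD : Bornology.IsBounded D) :
    BddBelow ((fun d => ⨆ ℓ, φ ℓ d) '' D) := by
  obtain ⟨ℓ₀⟩ := ‹Nonempty ι›
  obtain ⟨b, hb⟩ := ((φ ℓ₀).lipschitz.isBounded_image hD).bddBelow
  refine ⟨b, Set.forall_mem_image.mpr fun d hd => ?_⟩
  exact (hb (Set.mem_image_of_mem _ hd)).trans
    (le_ciSup (f := fun ℓ => φ ℓ d) (Set.finite_range _).bddAbove ℓ₀)

lemma neg_iSup_le_maxDescent (hD : Bornology.IsBounded D) (hd : d ∈ D) :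
    -(⨆ ℓ, φ ℓ d) ≤ maxDescent φ D :=
  neg_le_neg <| csInf_le (bddBelow_image_iSup_of_isBounded hD) (Set.mem_image_of_mem _ hd)

lemma maxDescent_nonneg (hD : Bornology.IsBounded D) (h0 : 0 ∈ D) : 0 ≤ maxDescent φ D := by
  simpa using neg_iSup_le_maxDescent (φ := φ) hD h0

lemma iSup_apply_le_iSup_apply_add (hd : ‖d‖ ≤ C) (h : ∀ ℓ, ‖φ ℓ - ψ ℓ‖ ≤ ε) :
    ⨆ ℓ, φ ℓ d ≤ (⨆ ℓ, ψ ℓ d) + C * ε := by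
  refine ciSup_le fun ℓ => ?_
  have herr : φ ℓ d - ψ ℓ d ≤ ε * C :=
    (le_abs_self _).trans ((φ ℓ - ψ ℓ).le_of_opNorm_le_of_le (h ℓ) hd)
  have hsup := le_ciSup (f := fun ℓ => ψ ℓ d) (Set.finite_range _).bddAbove ℓ
  linarith

lemma maxDescent_le_maxDescent_add (hD : D.Nonempty) (hDC : D ⊆ Metric.closedBall 0 C)
    (h : ∀ ℓ, ‖φ ℓ - ψ ℓ‖ ≤ ε) :
    maxDescent φ D ≤ maxDescent ψ D + C * ε := by
  refine maxDescent_le hD fun d hd => ?_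
  have hψφ : ⨆ ℓ, ψ ℓ d ≤ (⨆ ℓ, φ ℓ d) + C * ε :=
    iSup_apply_le_iSup_apply_add (mem_closedBall_zero_iff.mp (hDC hd))
      fun ℓ => (norm_sub_rev _ _).trans_le (h ℓ)
  have hψ : -(⨆ ℓ, ψ ℓ d) ≤ maxDescent ψ D :=
    neg_iSup_le_maxDescent (Metric.isBounded_closedBall.subset hDC) hd
  linarith

end MaxDescent

lemma min_le_min_add_of_le_add {α : Type*} [AddCommGroup α] [LinearOrder α] [IsOrderedAddMonoid α]
    {a b t δ : α} (h : a ≤ b + δ) (hδ : 0 ≤ δ) : min a t ≤ min b t + δ :=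
  (min_le_min h (le_add_of_nonneg_right hδ)).trans_eq (min_add_add_right b t δ)

section Omega

variable {n k : ℕ} {X : Set (EuclideanSpace ℝ (Fin n))} {x : EuclideanSpace ℝ (Fin n)}
  {g h : Fin k → EuclideanSpace ℝ (Fin n) → ℝ} {g' h' : Fin k → EuclideanSpace ℝ (Fin n)}
  {c ε : ℝ}

/-- The directions over which `omega` minimizes: those staying in `X` from `x`, of maximum norm at
most `1`. -/
def feasibleDirections (X : Set (EuclideanSpace ℝ (Fin n))) (x : EuclideanSpace ℝ (Fin n)) :
    Set (EuclideanSpace ℝ (Fin n)) :=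
  {d | x + d ∈ X ∧ supNorm d ≤ 1}

lemma zero_mem_feasibleDirections (hx : x ∈ X) : 0 ∈ feasibleDirections X x := by
  simpa [feasibleDirections, supNorm] using hx

lemma isBounded_feasibleDirections : Bornology.IsBounded (feasibleDirections X x) :=
  ((EuclideanSpace.equiv (Fin n) ℝ).antilipschitz.isBounded_preimage
    Metric.isBounded_closedBall).subset fun _ hd => mem_closedBall_zero_iff.mpr hd.2

lemma feasibleDirections_subset_closedBall
    (hcn : ∀ v : EuclideanSpace ℝ (Fin n), ‖v‖ ≤ √c * supNorm v) :
    feasibleDirections X x ⊆ Metric.closedBall 0 √c := fun d hd =>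
  mem_closedBall_zero_iff.mpr ((hcn d).trans (mul_le_of_le_one_right c.sqrt_nonneg hd.2))

lemma omega_eq_maxDescent (X : Set (EuclideanSpace ℝ (Fin n)))
    (g : Fin k → EuclideanSpace ℝ (Fin n) → ℝ) (x : EuclideanSpace ℝ (Fin n)) :
    omega X g x = maxDescent (fun ℓ => fderiv ℝ (g ℓ) x) (feasibleDirections X x) :=
  rfl

variable [NeZero k]

lemma omega_nonneg (hx : x ∈ X) : 0 ≤ omega X g x :=
  maxDescent_nonneg isBounded_feasibleDirections (zero_mem_feasibleDirections hx)

lemma omega_le_omega_add (hcn : ∀ v : EuclideanSpace ℝ (Fin n), ‖v‖ ≤ √c * supNorm v)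
    (hx : x ∈ X) (hg : ∀ ℓ, HasGradientAt (g ℓ) (g' ℓ) x)
    (hh : ∀ ℓ, HasGradientAt (h ℓ) (h' ℓ) x) (herr : ∀ ℓ, ‖g' ℓ - h' ℓ‖ ≤ ε) :
    omega X g x ≤ omega X h x + √c * ε := by
  rw [omega_eq_maxDescent, omega_eq_maxDescent]
  refine maxDescent_le_maxDescent_add ⟨0, zero_mem_feasibleDirections hx⟩
    (feasibleDirections_subset_closedBall hcn) fun ℓ => ?_
  rw [(hg ℓ).hasFDerivAt.fderiv, (hh ℓ).hasFDerivAt.fderiv, ← map_sub,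
    LinearIsometryEquiv.norm_map]
  exact herr ℓ

lemma min_omega_one_le_mul (hcn : ∀ v : EuclideanSpace ℝ (Fin n), ‖v‖ ≤ √c * supNorm v)
    (hx : x ∈ X) (hg : ∀ ℓ, HasGradientAt (g ℓ) (g' ℓ) x)
    (hh : ∀ ℓ, HasGradientAt (h ℓ) (h' ℓ) x) {κ Δ μ : ℝ} (hκ : 0 ≤ κ)
    (herr : ∀ ℓ, ‖g' ℓ - h' ℓ‖ ≤ κ * Δ) (hΔ : Δ ≤ μ * min (omega X h x) 1) :
    min (omega X g x) 1 ≤ (√c * κ * μ + 1) * min (omega X h x) 1 := by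
  have herr_nonneg : 0 ≤ κ * Δ := (norm_nonneg _).trans (herr 0)
  calc min (omega X g x) 1
      ≤ min (omega X h x) 1 + √c * (κ * Δ) :=
        min_le_min_add_of_le_add (omega_le_omega_add hcn hx hg hh herr) (by positivity)
    _ ≤ min (omega X h x) 1 + √c * (κ * (μ * min (omega X h x) 1)) := by gcongr
    _ = (√c * κ * μ + 1) * min (omega X h x) 1 := by ring

theorem truncated_measure_transfer_general {ι : Type*} {l : Filter ι}
    (hcn : ∀ v : EuclideanSpace ℝ (Fin n), ‖v‖ ≤ √c * supNorm v)
    {x : ι → EuclideanSpace ℝ (Fin n)} (hx : ∀ i, x i ∈ X)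
    {f : Fin k → EuclideanSpace ℝ (Fin n) → ℝ} {f' : ι → Fin k → EuclideanSpace ℝ (Fin n)}
    (hf : ∀ i ℓ, HasGradientAt (f ℓ) (f' i ℓ) (x i))
    {m : ι → Fin k → EuclideanSpace ℝ (Fin n) → ℝ} {m' : ι → Fin k → EuclideanSpace ℝ (Fin n)}
    (hm : ∀ i ℓ, HasGradientAt (m i ℓ) (m' i ℓ) (x i))
    {Δ : ι → ℝ} {κ μ : ℝ} (hκ : 0 ≤ κ) (herr : ∀ i ℓ, ‖f' i ℓ - m' i ℓ‖ ≤ κ * Δ i)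
    (hΔ : ∀ i, Δ i ≤ μ * min (omega X (m i) (x i)) 1) :
    (∀ i, min (omega X f (x i)) 1 ≤ (√c * κ * μ + 1) * min (omega X (m i) (x i)) 1)
    ∧ (Filter.Tendsto (fun i => min (omega X (m i) (x i)) 1) l (nhds 0) →
        Filter.Tendsto (fun i => min (omega X f (x i)) 1) l (nhds 0)) := by
  have hbound i : min (omega X f (x i)) 1 ≤ (√c * κ * μ + 1) * min (omega X (m i) (x i)) 1 :=
    min_omega_one_le_mul hcn (hx i) (hf i) (hm i) hκ (herr i) (hΔ i)
  refine ⟨hbound, fun hlim => squeeze_zero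
    (fun i => le_min (omega_nonneg (hx i)) zero_le_one) hbound ?_⟩
  simpa only [mul_zero] using hlim.const_mul (√c * κ * μ + 1)

end Omega

/-- Lemma 6.12: along iterates with fully linear gradients and radii controlled
by the truncated model criticality measure `ω̃_{mᵢ}(xᵢ) = min{ω_{mᵢ}(xᵢ), 1}`,
one has `ω̃(xᵢ) ≤ (√c·κ̇·μ + 1)·ω̃_{mᵢ}(xᵢ)`; consequently, if
`ω̃_{mᵢ}(xᵢ) → 0` then also `ω̃(xᵢ) → 0`. -/
theorem truncated_measure_transfer
    (n k : ℕ) (hk : 1 ≤ k)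
    (X : Set (EuclideanSpace ℝ (Fin n)))
    (hXne : X.Nonempty) (hXconv : Convex ℝ X) (hXcomp : IsCompact X)
    (f : Fin k → EuclideanSpace ℝ (Fin n) → ℝ)
    (U : Set (EuclideanSpace ℝ (Fin n))) (hUopen : IsOpen U) (hXU : X ⊆ U)
    (hf : ∀ ℓ, ContDiffOn ℝ 1 (f ℓ) U)
    (c : ℝ) (hc : 0 < c)
    (hcn : ∀ v : EuclideanSpace ℝ (Fin n), ‖v‖ ≤ Real.sqrt c * supNorm v)
    (x : ℕ → EuclideanSpace ℝ (Fin n)) (hx : ∀ i, x i ∈ X)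
    (Δ : ℕ → ℝ) (hΔ : ∀ i, 0 < Δ i)
    (m : ℕ → Fin k → EuclideanSpace ℝ (Fin n) → ℝ)
    (hm : ∀ i ℓ, ContDiff ℝ 1 (m i ℓ))
    (κdot : ℝ) (hκdot : 0 < κdot)
    (herr : ∀ i ℓ, ‖gradient (f ℓ) (x i) - gradient (m i ℓ) (x i)‖ ≤ κdot * Δ i)
    (μ : ℝ) (hμ : 0 < μ)
    (hΔμ : ∀ i, Δ i ≤ μ * min (omega X (m i) (x i)) 1) :
    (∀ i, min (omega X f (x i)) 1
      ≤ (Real.sqrt c * κdot * μ + 1) * min (omega X (m i) (x i)) 1)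
    ∧ (Filter.Tendsto (fun i => min (omega X (m i) (x i)) 1) Filter.atTop (nhds 0) →
        Filter.Tendsto (fun i => min (omega X f (x i)) 1) Filter.atTop (nhds 0)) := by
  have : NeZero k := ⟨Nat.one_le_iff_ne_zero.mp hk⟩
  exact truncated_measure_transfer_general hcn hx
    (fun i ℓ => ((hf ℓ).differentiableOn_one.differentiableAt
      (hUopen.mem_nhds (hXU (hx i)))).hasGradientAt)
    (fun i ℓ => ((hm i ℓ).differentiable_one (x i)).hasGradientAt) hκdot.le herr hΔμ
end
end
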